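/- In R = F₂[h₀, h₁, a, P]/(h₀h₁, h₁³, h₁a, a² + P h₀²), the kernel of multiplication by h₁ is the ideal generated by h₀, h₁², and a; explicitly ker(h₁) = h₀·F₂[h₀,P] ⊕ h₁²·F₂[P] ⊕ a·F₂[h₀,P] as an F₂-vector space. -/

import Mathlib

/-!
The relations show that `R` is spanned over `F₂` by five pieces: `h₀·F₂[h₀,P]`, `a·F₂[h₀,P]`,
`F₂[P]`, `h₁·F₂[P]` and `h₁²·F₂[P]`. Their sum is direct because two homomorphisms separate them:
killing `h₀` and `a` maps `R` to `F₂[P][h₁]/(h₁³)`, which sees the last three, while killing `h₁`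
and sending `a` to `h₀·√(-P)` maps `R` to `F₂[h₀,P][√(-P)]`, which sees the first two.
Multiplication by `h₁` annihilates the first two pieces and the last, and it shifts `F₂[P]` and
`h₁·F₂[P]` isomorphically one step along; the kernel can be read off.
-/

open MvPolynomial

/-- The defining ideal of the cohomology of classical `A(1)`:
variables `X 0 = h₀`, `X 1 = h₁`, `X 2 = a`, `X 3 = P`. -/
noncomputable def A1Ideal : Ideal (MvPolynomial (Fin 4) (ZMod 2)) :=
  Ideal.span {X 0 * X 1, (X 1) ^ 3, X 1 * X 2, (X 2) ^ 2 + X 3 * (X 0) ^ 2}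

/-- `R = F₂[h₀,h₁,a,P]/(h₀h₁, h₁³, h₁a, a² + Ph₀²)`. -/
noncomputable abbrev A1Cohomology : Type :=
  MvPolynomial (Fin 4) (ZMod 2) ⧸ A1Ideal

noncomputable def h₀ : A1Cohomology := Ideal.Quotient.mk A1Ideal (X 0)
noncomputable def h₁ : A1Cohomology := Ideal.Quotient.mk A1Ideal (X 1)
noncomputable def aElem : A1Cohomology := Ideal.Quotient.mk A1Ideal (X 2)
noncomputable def PElem : A1Cohomology := Ideal.Quotient.mk A1Ideal (X 3)

lemma eq_of_X_pow_three_dvd_sub {A : Type*} [Ring A] {w u v w' u' v' : A}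
    (h : (Polynomial.X ^ 3 : Polynomial A) ∣
      (Polynomial.C w + Polynomial.X * Polynomial.C u + Polynomial.X ^ 2 * Polynomial.C v)
        - (Polynomial.C w' + Polynomial.X * Polynomial.C u' + Polynomial.X ^ 2 * Polynomial.C v')) :
    w = w' ∧ u = u' ∧ v = v' := by
  have hcoeff := Polynomial.X_pow_dvd_iff.1 h
  refine ⟨sub_eq_zero.1 ?_, sub_eq_zero.1 ?_, sub_eq_zero.1 ?_⟩
  · simpa [Polynomial.coeff_X_pow] using hcoeff 0 (by norm_num)
  · simpa [Polynomial.coeff_C, Polynomial.coeff_X_pow] using hcoeff 1 (by norm_num)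
  · simpa [Polynomial.coeff_C, Polynomial.coeff_X] using hcoeff 2 (by norm_num)

namespace A1Cohomology

lemma h₀_mul_h₁ : h₀ * h₁ = 0 :=
  Ideal.Quotient.eq_zero_iff_mem.2 (Ideal.subset_span (by simp))

lemma h₁_pow_three : h₁ ^ 3 = 0 :=
  Ideal.Quotient.eq_zero_iff_mem.2 (Ideal.subset_span (by simp))

lemma h₁_mul_aElem : h₁ * aElem = 0 :=
  Ideal.Quotient.eq_zero_iff_mem.2 (Ideal.subset_span (by simp))

lemma aElem_sq_add_PElem_mul_h₀_sq : aElem ^ 2 + PElem * h₀ ^ 2 = 0 :=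
  Ideal.Quotient.eq_zero_iff_mem.2 (Ideal.subset_span (by simp))

section Lift

variable {S : Type*} [CommRing S] [Algebra (ZMod 2) S] {x y z w : S}

lemma aeval_eq_zero_of_mem_A1Ideal (hxy : x * y = 0) (hy : y ^ 3 = 0) (hyz : y * z = 0)
    (hz : z ^ 2 + w * x ^ 2 = 0) {p : MvPolynomial (Fin 4) (ZMod 2)} (hp : p ∈ A1Ideal) :
    aeval ![x, y, z, w] p = 0 := by
  suffices A1Ideal ≤ RingHom.ker (aeval (R := ZMod 2) ![x, y, z, w]) from this hp
  rw [A1Ideal, Ideal.span_le]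
  rintro q (rfl | rfl | rfl | rfl) <;> simp [RingHom.mem_ker, hxy, hy, hyz, hz]

/-- The universal property of `R`: the algebra homomorphism sending `h₀, h₁, a, P` to given elements
`x, y, z, w` that satisfy the defining relations. -/
noncomputable def lift (hxy : x * y = 0) (hy : y ^ 3 = 0) (hyz : y * z = 0)
    (hz : z ^ 2 + w * x ^ 2 = 0) : A1Cohomology →ₐ[ZMod 2] S :=
  Ideal.Quotient.liftₐ A1Ideal (aeval ![x, y, z, w])
    fun _ => aeval_eq_zero_of_mem_A1Ideal hxy hy hyz hz

variable (hxy : x * y = 0) (hy : y ^ 3 = 0) (hyz : y * z = 0) (hz : z ^ 2 + w * x ^ 2 = 0)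

@[simp]
lemma lift_h₀ : lift hxy hy hyz hz h₀ = x :=
  aeval_X (R := ZMod 2) ![x, y, z, w] 0

@[simp]
lemma lift_h₁ : lift hxy hy hyz hz h₁ = y :=
  aeval_X (R := ZMod 2) ![x, y, z, w] 1

@[simp]
lemma lift_aElem : lift hxy hy hyz hz aElem = z :=
  aeval_X (R := ZMod 2) ![x, y, z, w] 2

@[simp]
lemma lift_PElem : lift hxy hy hyz hz PElem = w :=
  aeval_X (R := ZMod 2) ![x, y, z, w] 3

end Lift

/-- The general element of `R`, written along the decomposition
`R = h₀·F₂[h₀,P] ⊕ a·F₂[h₀,P] ⊕ F₂[P] ⊕ h₁·F₂[P] ⊕ h₁²·F₂[P]`. The variables `X 0, X 1` of the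
bivariate polynomials stand for `h₀, P`. -/
noncomputable def normalForm (f g : MvPolynomial (Fin 2) (ZMod 2)) (w u v : Polynomial (ZMod 2)) :
    A1Cohomology :=
  h₀ * aeval ![h₀, PElem] f + aElem * aeval ![h₀, PElem] g
    + Polynomial.aeval PElem w + h₁ * Polynomial.aeval PElem u + h₁ ^ 2 * Polynomial.aeval PElem v

section NormalForm

variable (f g f' g' : MvPolynomial (Fin 2) (ZMod 2)) (w u v w' u' v' : Polynomial (ZMod 2))

lemma aeval_aeval_X_one :
    aeval ![h₀, PElem] (Polynomial.aeval (X 1 : MvPolynomial (Fin 2) (ZMod 2)) w) =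
      Polynomial.aeval PElem w := by
  simp [← Polynomial.aeval_algHom_apply]

lemma normalForm_add :
    normalForm f g w u v + normalForm f' g' w' u' v' =
      normalForm (f + f') (g + g') (w + w') (u + u') (v + v') := by
  simp only [normalForm, map_add]
  ring

lemma normalForm_mul_h₀ :
    normalForm f g w u v * h₀ =
      normalForm (X 0 * f + Polynomial.aeval (X 1) w) (X 0 * g) 0 0 0 := by
  simp only [normalForm, map_add, map_mul, map_zero, aeval_X, aeval_aeval_X_one,
    Matrix.cons_val_zero]
  linear_combination (Polynomial.aeval PElem u + h₁ * Polynomial.aeval PElem v) * h₀_mul_h₁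

lemma normalForm_mul_h₁ : normalForm f g w u v * h₁ = normalForm 0 0 0 w u := by
  simp only [normalForm, map_zero]
  linear_combination aeval ![h₀, PElem] f * h₀_mul_h₁ + aeval ![h₀, PElem] g * h₁_mul_aElem
    + Polynomial.aeval PElem v * h₁_pow_three

lemma normalForm_mul_aElem :
    normalForm f g w u v * aElem =
      normalForm (-(X 0 * X 1 * g)) (X 0 * f + Polynomial.aeval (X 1) w) 0 0 0 := by
  simp only [normalForm, map_add, map_mul, map_neg, map_zero, aeval_X, aeval_aeval_X_one,
    Matrix.cons_val_zero, Matrix.cons_val_one]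
  linear_combination aeval ![h₀, PElem] g * aElem_sq_add_PElem_mul_h₀_sq
    + (Polynomial.aeval PElem u + h₁ * Polynomial.aeval PElem v) * h₁_mul_aElem

lemma normalForm_mul_PElem :
    normalForm f g w u v * PElem =
      normalForm (X 1 * f) (X 1 * g)
        (Polynomial.X * w) (Polynomial.X * u) (Polynomial.X * v) := by
  simp only [normalForm, map_mul, aeval_X, Polynomial.aeval_X, Matrix.cons_val_one,
    Matrix.cons_val_zero]
  ring

end NormalForm

lemma exists_eq_normalForm (x : A1Cohomology) :
    ∃ f g w u v, x = normalForm f g w u v := by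
  obtain ⟨p, rfl⟩ := Ideal.Quotient.mk_surjective x
  induction p using MvPolynomial.induction_on with
  | C c =>
    refine ⟨0, 0, Polynomial.C c, 0, 0, ?_⟩
    simp only [normalForm, map_zero, mul_zero, add_zero, zero_add, Polynomial.aeval_C]
    rfl
  | add p q hp hq =>
    obtain ⟨f, g, w, u, v, hp⟩ := hp
    obtain ⟨f', g', w', u', v', hq⟩ := hq
    exact ⟨_, _, _, _, _, by rw [map_add, hp, hq, normalForm_add]⟩
  | mul_X p i hp =>
    obtain ⟨f, g, w, u, v, hp⟩ := hp
    rw [map_mul, hp]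
    fin_cases i
    · exact ⟨_, _, _, _, _, normalForm_mul_h₀ f g w u v⟩
    · exact ⟨_, _, _, _, _, normalForm_mul_h₁ f g w u v⟩
    · exact ⟨_, _, _, _, _, normalForm_mul_aElem f g w u v⟩
    · exact ⟨_, _, _, _, _, normalForm_mul_PElem f g w u v⟩

/-- The map `R → F₂[P][y]/(y³)` killing `h₀` and `a` and sending `h₁` to `y`; it detects the
summands `F₂[P]`, `h₁·F₂[P]` and `h₁²·F₂[P]` of `R`. -/
noncomputable def toTruncated :
    A1Cohomology →ₐ[ZMod 2]
      AdjoinRoot (Polynomial.X ^ 3 : Polynomial (Polynomial (ZMod 2))) :=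
  lift (x := 0) (y := AdjoinRoot.root _) (z := 0) (w := AdjoinRoot.of _ Polynomial.X)
    (zero_mul _) (by rw [← AdjoinRoot.mk_X, ← map_pow, AdjoinRoot.mk_self])
    (mul_zero _) (by simp)

/-- The map `R → F₂[h₀,P][ω]`, where `ω² = -P`, killing `h₁` and sending `a` to `h₀·ω`; it detects
the summands `h₀·F₂[h₀,P]` and `a·F₂[h₀,P]` of `R`. -/
noncomputable def toQuadratic :
    A1Cohomology →ₐ[ZMod 2] QuadraticAlgebra (MvPolynomial (Fin 2) (ZMod 2)) (-X 1) 0 :=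
  lift (x := .C (X 0)) (y := 0) (z := ⟨0, X 0⟩) (w := .C (X 1))
    (mul_zero _) (zero_pow three_ne_zero) (zero_mul _)
    (QuadraticAlgebra.ext
      (by
        simp only [pow_two, QuadraticAlgebra.re_add, QuadraticAlgebra.re_mul,
          QuadraticAlgebra.im_mul, QuadraticAlgebra.re_C, QuadraticAlgebra.im_C,
          QuadraticAlgebra.re_zero]
        ring)
      (by simp [pow_two]))

lemma toTruncated_normalForm (f g : MvPolynomial (Fin 2) (ZMod 2))
    (w u v : Polynomial (ZMod 2)) :
    toTruncated (normalForm f g w u v) =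
      AdjoinRoot.mk _
        (Polynomial.C w + Polynomial.X * Polynomial.C u + Polynomial.X ^ 2 * Polynomial.C v) := by
  have toTruncated_aeval (q : Polynomial (ZMod 2)) :
      toTruncated (Polynomial.aeval PElem q) = AdjoinRoot.of _ q := by
    rw [← Polynomial.aeval_algHom_apply, toTruncated, lift_PElem, ← AdjoinRoot.algebraMap_eq,
      Polynomial.aeval_algebraMap_apply, Polynomial.aeval_X_left_apply]
  simp only [normalForm, map_add, map_mul, map_pow, toTruncated_aeval]
  simp [toTruncated]

lemma toQuadratic_normalForm (f g : MvPolynomial (Fin 2) (ZMod 2))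
    (w u v : Polynomial (ZMod 2)) :
    toQuadratic (normalForm f g w u v) =
      ⟨X 0 * f + Polynomial.aeval (X 1) w, X 0 * g⟩ := by
  have toQuadratic_aeval (q : MvPolynomial (Fin 2) (ZMod 2)) :
      toQuadratic (aeval ![h₀, PElem] q) = .C q := by
    suffices toQuadratic.comp (aeval ![h₀, PElem]) = IsScalarTower.toAlgHom (ZMod 2) _ _ from
      DFunLike.congr_fun this q
    ext1 i
    fin_cases i <;> simp [toQuadratic, QuadraticAlgebra.C_eq_algebraMap]
  simp only [normalForm, ← aeval_aeval_X_one, map_add, map_mul, map_pow, toQuadratic_aeval]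
  ext <;> simp [toQuadratic]

lemma normalForm_inj {f g f' g' : MvPolynomial (Fin 2) (ZMod 2)}
    {w u v w' u' v' : Polynomial (ZMod 2)} :
    normalForm f g w u v = normalForm f' g' w' u' v' ↔
      f = f' ∧ g = g' ∧ w = w' ∧ u = u' ∧ v = v' := by
  refine ⟨fun h => ?_, by rintro ⟨rfl, rfl, rfl, rfl, rfl⟩; rfl⟩
  have hTrunc := congrArg toTruncated h
  have hQuad := congrArg toQuadratic h
  rw [toTruncated_normalForm, toTruncated_normalForm, AdjoinRoot.mk_eq_mk] at hTrunc
  obtain ⟨rfl, rfl, rfl⟩ := eq_of_X_pow_three_dvd_sub hTrunc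
  simpa [toQuadratic_normalForm] using hQuad

lemma h₁_mul_eq_zero_iff {x : A1Cohomology} :
    h₁ * x = 0 ↔ ∃ f g v, x = normalForm f g 0 0 v := by
  have normalForm_zero : normalForm 0 0 0 0 0 = 0 := by simp [normalForm]
  obtain ⟨f, g, w, u, v, rfl⟩ := exists_eq_normalForm x
  rw [mul_comm, normalForm_mul_h₁, ← normalForm_zero]
  simp [normalForm_inj]

lemma normalForm_zero_zero (f g : MvPolynomial (Fin 2) (ZMod 2)) (v : Polynomial (ZMod 2)) :
    normalForm f g 0 0 v =
      h₀ * aeval ![h₀, PElem] f + h₁ ^ 2 * Polynomial.aeval PElem v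
        + aElem * aeval ![h₀, PElem] g := by
  simp only [normalForm, map_zero, mul_zero, add_zero]
  ring

end A1Cohomology

/-- In `R = F₂[h₀,h₁,a,P]/(h₀h₁, h₁³, h₁a, a² + Ph₀²)`, the kernel of multiplication by
`h₁` is `h₀·F₂[h₀,P] ⊕ h₁²·F₂[P] ⊕ a·F₂[h₀,P]` as an `F₂`-vector space: every
`h₁`-torsion element decomposes in this form, and the decomposition is unique. -/
theorem ker_h1_description :
    (∀ x : A1Cohomology,
      h₁ * x = 0 ↔
        ∃ (f g : MvPolynomial (Fin 2) (ZMod 2)) (u : Polynomial (ZMod 2)),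
          x = h₀ * (MvPolynomial.aeval ![h₀, PElem] f)
            + h₁ ^ 2 * (Polynomial.aeval PElem u)
            + aElem * (MvPolynomial.aeval ![h₀, PElem] g)) ∧
    (∀ (f g f' g' : MvPolynomial (Fin 2) (ZMod 2)) (u u' : Polynomial (ZMod 2)),
      h₀ * (MvPolynomial.aeval ![h₀, PElem] f)
          + h₁ ^ 2 * (Polynomial.aeval PElem u)
          + aElem * (MvPolynomial.aeval ![h₀, PElem] g)
        = h₀ * (MvPolynomial.aeval ![h₀, PElem] f')
          + h₁ ^ 2 * (Polynomial.aeval PElem u')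
          + aElem * (MvPolynomial.aeval ![h₀, PElem] g') →
      h₀ * (MvPolynomial.aeval ![h₀, PElem] f)
          = h₀ * (MvPolynomial.aeval ![h₀, PElem] f') ∧
      h₁ ^ 2 * (Polynomial.aeval PElem u) = h₁ ^ 2 * (Polynomial.aeval PElem u') ∧
      aElem * (MvPolynomial.aeval ![h₀, PElem] g)
          = aElem * (MvPolynomial.aeval ![h₀, PElem] g')) := by
  simp only [← A1Cohomology.normalForm_zero_zero]
  refine ⟨fun x => A1Cohomology.h₁_mul_eq_zero_iff, fun f g f' g' u u' h => ?_⟩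
  obtain ⟨rfl, rfl, -, -, rfl⟩ := A1Cohomology.normalForm_inj.1 h
  exact ⟨rfl, rfl, rfl⟩
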